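/- arXiv:1503.07850 — 3 statements merged into one kernel-verified Lean document; each statement's English description precedes it below -/
import Mathlib

section
/- The function v : ℝ × ℝ → ℝ defined by v(x,t) = 1/2 − (1/2)·tanh((1/4)·(x + (3/2)·t)) satisfies, for all real x and t, the equation ∂v/∂t(x,t) = ∂²v/∂x²(x,t) + v(x,t)·∂v/∂x(x,t) + v(x,t)·(1 − v(x,t))·(v(x,t) − 1), and moreover v(x,0) = exp(−x/4)/(exp(x/4) + exp(−x/4)) for all real x. -/
/-! The profile `v` is a logistic front: since `tanh' = 1 - tanh²`, it satisfies the first-order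
equations `vₓ = -v(1 - v)/2` and `vₜ = -3v(1 - v)/4`. Differentiating the former once more gives
`vₓₓ = v(1 - v)(1 - 2v)/4`, so every term of the equation is `v(1 - v)` times a polynomial in `v`,
and the identity reduces to `-3/4 = (1 - 2v)/4 - v/2 + (v - 1)`. -/

noncomputable def v : ℝ × ℝ → ℝ := fun p =>
  1/2 - (1/2) * Real.tanh ((1/4) * (p.1 + (3/2) * p.2))

theorem hasDerivAt_tanh_real (z : ℝ) : HasDerivAt Real.tanh (1 - Real.tanh z ^ 2) z := by
  have hc : Real.cosh z ≠ 0 := (Real.cosh_pos z).ne'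
  have h := (Real.hasDerivAt_sinh z).div (Real.hasDerivAt_cosh z) hc
  have e : Real.tanh = Real.sinh / Real.cosh := funext Real.tanh_eq_sinh_div_cosh
  rw [← e] at h
  refine h.congr_deriv ?_
  rw [Real.tanh_eq_sinh_div_cosh]
  field_simp

theorem hasDerivAt_v_space (x t : ℝ) :
    HasDerivAt (fun y => v (y, t)) (-(1/2) * (v (x, t) * (1 - v (x, t)))) x := by
  have hi : HasDerivAt (fun y : ℝ => (1/4) * (y + (3/2) * t)) ((1/4) * 1) x :=
    ((hasDerivAt_id x).add_const _).const_mul _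
  have h := (((hasDerivAt_tanh_real _).comp x hi).const_mul (1/2)).const_sub (1/2)
  refine h.congr_deriv ?_
  simp only [v]
  ring

theorem hasDerivAt_v_time (x t : ℝ) :
    HasDerivAt (fun s => v (x, s)) (-(3/4) * (v (x, t) * (1 - v (x, t)))) t := by
  have hi : HasDerivAt (fun s : ℝ => (1/4) * (x + (3/2) * s)) ((1/4) * ((3/2) * 1)) t :=
    (((hasDerivAt_id t).const_mul _).const_add _).const_mul _
  have h := (((hasDerivAt_tanh_real _).comp t hi).const_mul (1/2)).const_sub (1/2)
  refine h.congr_deriv ?_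
  simp only [v]
  ring

theorem burgers_huxley_caseII :
    (∀ x t : ℝ,
      deriv (fun s => v (x, s)) t =
        deriv (deriv (fun y => v (y, t))) x +
          v (x, t) * deriv (fun y => v (y, t)) x +
          v (x, t) * (1 - v (x, t)) * (v (x, t) - 1)) ∧
    (∀ x : ℝ, v (x, 0) =
      Real.exp (-x/4) / (Real.exp (x/4) + Real.exp (-x/4))) := by
  refine ⟨fun x t => ?_, fun x => ?_⟩
  · have hx : deriv (fun y => v (y, t)) = fun y => -(1/2) * (v (y, t) * (1 - v (y, t))) :=
      funext fun y => (hasDerivAt_v_space y t).deriv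
    have h1 := hasDerivAt_v_space x t
    have hxx := ((h1.mul (h1.const_sub 1)).const_mul (-(1/2))).deriv
    simp only [Pi.mul_apply] at hxx
    rw [(hasDerivAt_v_time x t).deriv, hx, hxx]
    ring
  · have e1 : (1/4) * (x + (3/2) * 0) = x/4 := by ring
    have hpos : Real.exp (x/4) + Real.exp (-(x/4)) ≠ 0 := by positivity
    simp only [v]
    rw [e1, Real.tanh_eq, neg_div]
    field_simp
    ring
end

section
/- Let v₀ : ℝ → ℝ be v₀(x) = exp(−x/4)/(exp(x/4) + exp(−x/4)). Then the function v₁(x,t) = −(3/4)·t/(exp(x/4) + exp(−x/4))² satisfies v₁(x,0) = 0 for all x, and for all real x, t: ∂v₁/∂t(x,t) = v₀''(x) + v₀(x)·v₀'(x) + v₀(x)·(1 − v₀(x))·(v₀(x) − 1). -/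
/-!
The profile `v₀` is a logistic function: `v₀' = -v₀ (1 - v₀) / 2`, hence
`v₀'' = v₀ (1 - v₀) (1 - 2 v₀) / 4`. Substituting, the right-hand side collapses to
`-(3/4) v₀ (1 - v₀)`, and `v₀ (1 - v₀) = 1 / (exp (x/4) + exp (-x/4))²` because
`exp (x/4) * exp (-x/4) = 1`. This is the slope of the linear function `t ↦ v₁ x t`.
-/

noncomputable def v₀ : ℝ → ℝ := fun x =>
  Real.exp (-x/4) / (Real.exp (x/4) + Real.exp (-x/4))

noncomputable def v₁ : ℝ → ℝ → ℝ := fun x t =>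
  -(3/4) * t / (Real.exp (x/4) + Real.exp (-x/4))^2

theorem v₀_mul_one_sub (x : ℝ) :
    v₀ x * (1 - v₀ x) = 1 / (Real.exp (x/4) + Real.exp (-x/4))^2 := by
  have hD : Real.exp (x/4) + Real.exp (-x/4) ≠ 0 := by positivity
  have hE : Real.exp (x/4) * Real.exp (-x/4) = 1 := by
    rw [← Real.exp_add, ← Real.exp_zero]
    congr 1
    ring
  simp only [v₀]
  rw [neg_div] at hE hD ⊢
  field_simp
  linear_combination hE

/-- The logistic equation satisfied by `v₀`. -/
theorem hasDerivAt_v₀ (x : ℝ) : HasDerivAt v₀ (-(v₀ x * (1 - v₀ x)) / 2) x := by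
  have hD : Real.exp (x/4) + Real.exp (-x/4) ≠ 0 := by positivity
  have hp : HasDerivAt (fun y : ℝ => Real.exp (y/4)) (Real.exp (x/4) * (1/4)) x :=
    ((hasDerivAt_id x).div_const 4).exp
  have hm : HasDerivAt (fun y : ℝ => Real.exp (-y/4)) (Real.exp (-x/4) * (-1/4)) x :=
    ((hasDerivAt_id x).neg.div_const 4).exp
  refine (hm.div (hp.add hm) hD).congr_deriv ?_
  simp only [v₀, Pi.add_apply]
  field_simp
  ring

theorem hpm_caseII_order1 :
    (∀ x : ℝ, v₁ x 0 = 0) ∧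
    (∀ x t : ℝ,
      deriv (fun s => v₁ x s) t =
        deriv (deriv v₀) x + v₀ x * deriv v₀ x +
          v₀ x * (1 - v₀ x) * (v₀ x - 1)) := by
  refine ⟨fun x => by simp [v₁], fun x t => ?_⟩
  have h1 : deriv v₀ = fun y => -(v₀ y * (1 - v₀ y)) / 2 :=
    funext fun y => (hasDerivAt_v₀ y).deriv
  have h2 : deriv (deriv v₀) x = v₀ x * (1 - v₀ x) * (1 - 2 * v₀ x) / 4 := by
    have h := hasDerivAt_v₀ x
    rw [h1]
    refine (((h.mul (h.const_sub 1)).neg.div_const 2).congr_deriv ?_).deriv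
    ring
  have h3 : deriv (fun s => v₁ x s) t =
      -(3/4) * (1 / (Real.exp (x/4) + Real.exp (-x/4))^2) := by
    refine ((((hasDerivAt_id t).const_mul (-(3/4))).div_const
      ((Real.exp (x/4) + Real.exp (-x/4))^2)).congr_deriv ?_).deriv
    ring
  rw [h3, h2, h1, ← v₀_mul_one_sub]
  ring
end

section
/- Let v₀(x) = exp(−x/4)/(exp(x/4) + exp(−x/4)), v₁(x,t) = −(3/4)·t/(exp(x/4) + exp(−x/4))², and v₂(x,t) = (9/32)·(exp(x/4) − exp(−x/4))·t²/(exp(x/4) + exp(−x/4))³. Then the function v₃(x,t) = −(9/128)·(exp(x/4)² + exp(−x/4)² − 4)·t³/(exp(x/4) + exp(−x/4))⁴ satisfies v₃(x,0) = 0 for all x, and for all real x, t: ∂v₃/∂t(x,t) = ∂²v₂/∂x²(x,t) + v₀(x)·∂v₂/∂x(x,t) + v₂(x,t)·v₀'(x) + v₁(x,t)·∂v₁/∂x(x,t) + 4·v₀(x)·v₂(x,t) − v₂(x,t) − 3·v₂(x,t)·v₀(x)² + 2·v₁(x,t)² − 3·v₀(x)·v₁(x,t)². -/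
noncomputable def v₂ : ℝ → ℝ → ℝ := fun x t =>
  (9/32) * (Real.exp (x/4) - Real.exp (-x/4)) * t^2 /
    (Real.exp (x/4) + Real.exp (-x/4))^3

noncomputable def v₃ : ℝ → ℝ → ℝ := fun x t =>
  -(9/128) * ((Real.exp (x/4))^2 + (Real.exp (-x/4))^2 - 4) * t^3 /
    (Real.exp (x/4) + Real.exp (-x/4))^4

lemma hasDerivAt_exp_quarter (x : ℝ) :
    HasDerivAt (fun y : ℝ => Real.exp (y/4)) (Real.exp (x/4) / 4) x := by
  have h := ((hasDerivAt_id x).div_const 4).exp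
  simpa [div_eq_mul_inv] using h

lemma hasDerivAt_exp_neg_quarter (x : ℝ) :
    HasDerivAt (fun y : ℝ => Real.exp (-y/4)) (-Real.exp (-x/4) / 4) x := by
  have h := ((hasDerivAt_id' x).fun_neg.div_const 4).exp
  exact h.congr_deriv (by ring)

lemma hasDerivAt_exp_sum (x : ℝ) :
    HasDerivAt (fun y : ℝ => Real.exp (y/4) + Real.exp (-y/4))
      ((Real.exp (x/4) - Real.exp (-x/4)) / 4) x := by
  exact ((hasDerivAt_exp_quarter x).fun_add (hasDerivAt_exp_neg_quarter x)).congr_deriv (by ring)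

lemma hasDerivAt_exp_diff (x : ℝ) :
    HasDerivAt (fun y : ℝ => Real.exp (y/4) - Real.exp (-y/4))
      ((Real.exp (x/4) + Real.exp (-x/4)) / 4) x := by
  exact ((hasDerivAt_exp_quarter x).fun_sub (hasDerivAt_exp_neg_quarter x)).congr_deriv (by ring)

lemma exp_sum_ne_zero (x : ℝ) : Real.exp (x/4) + Real.exp (-x/4) ≠ 0 := by positivity

lemma exp_neg_quarter_eq (x : ℝ) : Real.exp (-x/4) = (Real.exp (x/4))⁻¹ := by
  rw [← Real.exp_neg, neg_div]

lemma deriv_v₀ (x : ℝ) :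
    deriv v₀ x = -1 / (2 * (Real.exp (x/4) + Real.exp (-x/4))^2) := by
  have h := (hasDerivAt_exp_neg_quarter x).fun_div (hasDerivAt_exp_sum x) (exp_sum_ne_zero x)
  refine (HasDerivAt.deriv (f := v₀) h).trans ?_
  rw [exp_neg_quarter_eq]
  field_simp
  ring

lemma deriv_v₁ (x t : ℝ) :
    deriv (fun y => v₁ y t) x =
      (3/8) * t * (Real.exp (x/4) - Real.exp (-x/4)) /
        (Real.exp (x/4) + Real.exp (-x/4))^3 := by
  have h := (hasDerivAt_const x (-(3/4) * t)).fun_div ((hasDerivAt_exp_sum x).fun_pow 2)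
    (pow_ne_zero 2 (exp_sum_ne_zero x))
  refine (HasDerivAt.deriv (f := fun y => v₁ y t) h).trans ?_
  have := exp_sum_ne_zero x
  field_simp
  ring

/-- The numerator is `S² - 3 D²` with `D² = S² - 4` substituted, so that only `S` has to be
differentiated for the second derivative. -/
lemma deriv_v₂ (t : ℝ) :
    deriv (fun y => v₂ y t) = fun x =>
      (9/128) * t^2 * (12 - 2 * (Real.exp (x/4) + Real.exp (-x/4))^2) /
        (Real.exp (x/4) + Real.exp (-x/4))^4 := by
  funext x
  have h := (((hasDerivAt_exp_diff x).const_mul (9/32)).mul_const (t^2)).fun_div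
    ((hasDerivAt_exp_sum x).fun_pow 3) (pow_ne_zero 3 (exp_sum_ne_zero x))
  refine (HasDerivAt.deriv (f := fun y => v₂ y t) h).trans ?_
  rw [show 3 - 1 = 2 from rfl, exp_neg_quarter_eq]
  field_simp
  ring

lemma deriv_deriv_v₂ (x t : ℝ) :
    deriv (deriv (fun y => v₂ y t)) x =
      (9/128) * t^2 * (Real.exp (x/4) - Real.exp (-x/4)) *
        ((Real.exp (x/4) + Real.exp (-x/4))^2 - 12) /
          (Real.exp (x/4) + Real.exp (-x/4))^5 := by
  rw [deriv_v₂]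
  have h := (((((hasDerivAt_exp_sum x).fun_pow 2).const_mul 2).const_sub 12).const_mul
    ((9/128) * t^2)).fun_div ((hasDerivAt_exp_sum x).fun_pow 4)
    (pow_ne_zero 4 (exp_sum_ne_zero x))
  refine h.deriv.trans ?_
  have := exp_sum_ne_zero x
  field_simp
  ring

lemma deriv_v₃ (x t : ℝ) :
    deriv (fun s => v₃ x s) t =
      -(27/128) * ((Real.exp (x/4))^2 + (Real.exp (-x/4))^2 - 4) * t^2 /
        (Real.exp (x/4) + Real.exp (-x/4))^4 := by
  have h := (((hasDerivAt_id t).fun_pow 3).const_mul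
    (-(9/128) * ((Real.exp (x/4))^2 + (Real.exp (-x/4))^2 - 4))).div_const
    ((Real.exp (x/4) + Real.exp (-x/4))^4)
  refine (HasDerivAt.deriv (f := fun s => v₃ x s) h).trans ?_
  simp only [id]
  push_cast
  ring

theorem hpm_caseII_order3 :
    (∀ x : ℝ, v₃ x 0 = 0) ∧
    (∀ x t : ℝ,
      deriv (fun s => v₃ x s) t =
        deriv (deriv (fun y => v₂ y t)) x +
          v₀ x * deriv (fun y => v₂ y t) x +
          v₂ x t * deriv v₀ x +
          v₁ x t * deriv (fun y => v₁ y t) x +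
          4 * v₀ x * v₂ x t - v₂ x t - 3 * v₂ x t * (v₀ x)^2 +
          2 * (v₁ x t)^2 - 3 * v₀ x * (v₁ x t)^2) := by
  refine ⟨fun x => by simp [v₃], fun x t => ?_⟩
  rw [deriv_deriv_v₂, deriv_v₃, deriv_v₂, deriv_v₀, deriv_v₁]
  simp only [v₀, v₁, v₂]
  rw [exp_neg_quarter_eq]
  field_simp
  ring
end
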